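/- For every β ∈ ℂ and a.e. x ∈ (a₁ + a₂/2, π − a₁), the function V(x) := q₂^β(x) − ∫_{x+a₁−a₂/2}^{π} p₂^β(t)·p₂^β(t − x + a₂/2) dt vanishes: q₂^β(x) = ∫_{x+a₁−a₂/2}^{π} p₂^β(t)·p₂^β(t − x + a₂/2) dt. -/

import Mathlib

open MeasureTheory Real Set Filter

/-!
Put `y = x - a₂ / 2` and substitute `t = s + y`, so that the integral becomes
`∫ s in a₁..(π - y), p₂ (s + y) * p₂ s`. The factor `p₂ s` vanishes for `s ≤ a₁ + a₂ / 2`; beyond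
that point `s` lies in the lower piece of `p₂`, where it equals `β * e₁`, while
`s + y > 2 * a₁ + a₂ / 2` lies in the upper piece, where it equals `h`. So only the cross term
survives, and the integral is `β * M e₁ x = β * e₁ x = q₂ x`.
-/

theorem intervalIntegral_comp_self_sub {E : Type*} [NormedAddCommGroup E] [NormedSpace ℝ E]
    (f : ℝ → ℝ → E) (a b y : ℝ) :
    ∫ t in (a + y)..b, f t (t - y) = ∫ s in a..(b - y), f (s + y) s := by
  simpa only [sub_add_cancel, add_sub_cancel_right] using
    intervalIntegral.integral_comp_sub_right (a := a + y) (b := b) (fun s => f (s + y) s) y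

theorem intervalIntegral_eq_of_eqOn_zero_Ioc_left {E : Type*} [NormedAddCommGroup E]
    [NormedSpace ℝ E] {μ : Measure ℝ} {f : ℝ → E} {a b c : ℝ} (hac : a ≤ c) (hcb : c ≤ b)
    (hf : EqOn f 0 (Ioc a c)) : ∫ t in a..b, f t ∂μ = ∫ t in c..b, f t ∂μ := by
  rw [intervalIntegral.integral_of_le (hac.trans hcb), intervalIntegral.integral_of_le hcb]
  refine setIntegral_eq_of_subset_of_forall_sdiff_eq_zero measurableSet_Ioc
    (Ioc_subset_Ioc_left hac) fun t ht => hf ⟨ht.1.1, ?_⟩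
  exact not_lt.mp fun hct => ht.2 ⟨hct, ht.1.2⟩

section Family

variable {𝕜 : Type*} [RCLike 𝕜]

/-- The integral operator `M` of the paper, with kernel `h (t + x - a₂ / 2)` of Hankel type, acting
on functions on `(a₁ + a₂ / 2, b - a₁)`; the paper has `b = π`. -/
noncomputable def hankelOp (a₁ a₂ b : ℝ) (h f : ℝ → 𝕜) (x : ℝ) : 𝕜 :=
  ∫ t in (a₁ + a₂ / 2)..(b - x + a₂ / 2), f t * h (t + x - a₂ / 2)

/-- The function `p₂^β` of the paper, where `b = π`, `e` is the eigenfunction `e₁`, and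
`b - a₁ ≤ 2 * a₁ + a₂ / 2` makes the two intervals disjoint. -/
noncomputable def pFamily (a₁ a₂ b : ℝ) (h e : ℝ → 𝕜) (β : 𝕜) (x : ℝ) : 𝕜 :=
  if x ∈ Ioo (a₁ + a₂ / 2) (b - a₁) then β * e x
  else if x ∈ Ioo (2 * a₁ + a₂ / 2) b then h x else 0

/-- The function `q₂^β` of the paper, where `b = π` and `e` is the eigenfunction `e₁`. -/
noncomputable def qFamily (a₁ a₂ b : ℝ) (e : ℝ → 𝕜) (β : 𝕜) (x : ℝ) : 𝕜 :=
  if x ∈ Ioo (a₁ + a₂ / 2) (b - a₁) then β * e x else 0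

theorem hankelOp_ofReal (a₁ a₂ b : ℝ) (h f : ℝ → ℝ) (x : ℝ) :
    hankelOp a₁ a₂ b (fun t => (h t : 𝕜)) (fun t => (f t : 𝕜)) x =
      ((hankelOp a₁ a₂ b h f x : ℝ) : 𝕜) := by
  simp only [hankelOp, ← RCLike.ofReal_mul, RCLike.intervalIntegral_ofReal]

variable {a₁ a₂ b x : ℝ}

theorem pFamily_of_mem_lower (h e : ℝ → 𝕜) (β : 𝕜) (hx : x ∈ Ioo (a₁ + a₂ / 2) (b - a₁)) :
    pFamily a₁ a₂ b h e β x = β * e x :=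
  if_pos hx

theorem pFamily_of_mem_upper (h e : ℝ → 𝕜) (β : 𝕜) (hab : b - a₁ ≤ 2 * a₁ + a₂ / 2)
    (hx : x ∈ Ioo (2 * a₁ + a₂ / 2) b) : pFamily a₁ a₂ b h e β x = h x := by
  have hx_lower : x ∉ Ioo (a₁ + a₂ / 2) (b - a₁) := fun hx' => by linarith [hx.1, hx'.2]
  rw [pFamily, if_neg hx_lower, if_pos hx]

theorem pFamily_of_le (h e : ℝ → 𝕜) (β : 𝕜) (ha₁ : 0 ≤ a₁) (hx : x ≤ a₁ + a₂ / 2) :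
    pFamily a₁ a₂ b h e β x = 0 := by
  have hx_lower : x ∉ Ioo (a₁ + a₂ / 2) (b - a₁) := fun hx' => by linarith [hx'.1]
  have hx_upper : x ∉ Ioo (2 * a₁ + a₂ / 2) b := fun hx' => by linarith [hx'.1]
  rw [pFamily, if_neg hx_lower, if_neg hx_upper]

theorem integral_pFamily_mul_pFamily (h e : ℝ → 𝕜) (β : 𝕜) (ha₂ : 0 ≤ a₂)
    (hab : b - a₁ ≤ 2 * a₁ + a₂ / 2) (hx : x ∈ Ioo (a₁ + a₂ / 2) (b - a₁)) :
    ∫ t in (x + a₁ - a₂ / 2)..b,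
        pFamily a₁ a₂ b h e β t * pFamily a₁ a₂ b h e β (t - x + a₂ / 2) =
      β * hankelOp a₁ a₂ b h e x := by
  set p := pFamily a₁ a₂ b h e β
  obtain ⟨hx_left, hx_right⟩ := hx
  have p_eq_zero : EqOn (fun s => p (s + (x - a₂ / 2)) * p s) 0 (Ioc a₁ (a₁ + a₂ / 2)) :=
    fun s hs => mul_eq_zero_of_right _ (pFamily_of_le h e β (by linarith) hs.2)
  have p_mul_p : EqOn (fun s => p (s + (x - a₂ / 2)) * p s)
      (fun s => β * (e s * h (s + x - a₂ / 2))) (Ioo (a₁ + a₂ / 2) (b - x + a₂ / 2)) := by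
    intro s ⟨hs_left, hs_right⟩
    have lower : p s = β * e s := pFamily_of_mem_lower h e β ⟨hs_left, by linarith⟩
    have upper : p (s + x - a₂ / 2) = h (s + x - a₂ / 2) :=
      pFamily_of_mem_upper h e β hab ⟨by linarith, by linarith⟩
    simp only [← add_sub_assoc, lower, upper]
    ring
  calc
    ∫ t in (x + a₁ - a₂ / 2)..b, p t * p (t - x + a₂ / 2)
      = ∫ t in (a₁ + (x - a₂ / 2))..b, p t * p (t - (x - a₂ / 2)) := by
        simp only [sub_add, add_comm x a₁, add_sub_assoc]
    _ = ∫ s in a₁..(b - x + a₂ / 2), p (s + (x - a₂ / 2)) * p s := by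
        rw [intervalIntegral_comp_self_sub (fun t s => p t * p s), sub_add]
    _ = ∫ s in (a₁ + a₂ / 2)..(b - x + a₂ / 2), p (s + (x - a₂ / 2)) * p s :=
        intervalIntegral_eq_of_eqOn_zero_Ioc_left (by linarith) (by linarith) p_eq_zero
    _ = ∫ s in (a₁ + a₂ / 2)..(b - x + a₂ / 2), β * (e s * h (s + x - a₂ / 2)) :=
        intervalIntegral.integral_congr_Ioo_of_le (by linarith) p_mul_p
    _ = β * hankelOp a₁ a₂ b h e x := intervalIntegral.integral_const_mul _ _

theorem V_vanishes_general {h e : ℝ → 𝕜} (ha₂ : 0 ≤ a₂) (hab : b - a₁ ≤ 2 * a₁ + a₂ / 2)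
    (heig : ∀ᵐ x ∂(volume.restrict (Ioo (a₁ + a₂ / 2) (b - a₁))), hankelOp a₁ a₂ b h e x = e x)
    (β : 𝕜) :
    ∀ᵐ x ∂(volume.restrict (Ioo (a₁ + a₂ / 2) (b - a₁))),
      qFamily a₁ a₂ b e β x = ∫ t in (x + a₁ - a₂ / 2)..b,
        pFamily a₁ a₂ b h e β t * pFamily a₁ a₂ b h e β (t - x + a₂ / 2) := by
  filter_upwards [heig, ae_restrict_mem measurableSet_Ioo] with x hMx hx
  rw [integral_pFamily_mul_pFamily h e β ha₂ hab hx, hMx]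
  exact if_pos hx

end Family

/-- For every `β ∈ ℂ` and a.e. `x ∈ (a₁+a₂/2, π−a₁)`,
`V(x) := q₂^β(x) − ∫_{x+a₁−a₂/2}^{π} p₂^β(t)·p₂^β(t − x + a₂/2) dt` vanishes. -/
theorem V_vanishes (a₁ a₂ : ℝ)
    (ha₁ : π / 3 ≤ a₁) (ha₁' : a₁ < 2 * π / 5)
    (ha₂ : π / 3 ≤ a₂) (ha₂' : a₂ < 2 * π / 3)
    (ha : a₁ < a₂) (hlt : 2 * a₁ + a₂ / 2 < π)
    (h e₁ : ℝ → ℝ)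
    (hh : MemLp h 2 (volume.restrict (Ioo 0 π)))
    (hh0 : ∀ᵐ x ∂(volume : Measure ℝ), x ∉ Ioo (2 * a₁ + a₂ / 2) π → h x = 0)
    (he₁ : MemLp e₁ 2 (volume.restrict (Ioo (a₁ + a₂ / 2) (π - a₁))))
    (heig : ∀ᵐ x ∂(volume.restrict (Ioo (a₁ + a₂ / 2) (π - a₁))),
      (∫ t in (a₁ + a₂ / 2)..(π - x + a₂ / 2), e₁ t * h (t + x - a₂ / 2)) = e₁ x)
    (p₂ q₂ : ℂ → ℝ → ℂ)
    (hp₂ : ∀ β x, p₂ β x =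
      if x ∈ Ioo (a₁ + a₂ / 2) (π - a₁) then β * (e₁ x : ℂ)
      else if x ∈ Ioo (2 * a₁ + a₂ / 2) π then (h x : ℂ) else 0)
    (hq₂ : ∀ β x, q₂ β x =
      if x ∈ Ioo (a₁ + a₂ / 2) (π - a₁) then β * (e₁ x : ℂ) else 0) :
    ∀ β : ℂ, ∀ᵐ x ∂(volume.restrict (Ioo (a₁ + a₂ / 2) (π - a₁))),
      q₂ β x = ∫ t in (x + a₁ - a₂ / 2)..π, p₂ β t * p₂ β (t - x + a₂ / 2) := by
  obtain rfl : p₂ = pFamily a₁ a₂ π (fun t => (h t : ℂ)) (fun t => (e₁ t : ℂ)) := funext₂ hp₂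
  obtain rfl : q₂ = qFamily a₁ a₂ π (fun t => (e₁ t : ℂ)) := funext₂ hq₂
  exact V_vanishes_general (by linarith [pi_pos]) (by linarith) <|
    heig.mono fun x hx => (hankelOp_ofReal a₁ a₂ π h e₁ x).trans (congrArg _ hx)
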